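/- arXiv:2405.00729 — 2 statements merged into one kernel-verified Lean document; each statement's English description precedes it below -/
import Mathlib

section
/- Let (A, {Δ(λ)}) be a split quasi-hereditary algebra over a commutative Noetherian ring R, with λ ∈ Λ maximal. Then D Hom_A(Δ(λ), A) ≅ ∇(λ), the costandard module indexed by λ. -/
open scoped TensorProduct
open CategoryTheory

noncomputable section

section Core

variable (R : Type) [CommRing R] (A : Type) [Ring A] [Algebra R A]

/-- The action of `a : A` on an `A`-module as an `R`-linear endomorphism. -/
def actL (M : Type) [AddCommGroup M] [Module R M] [Module A M] [IsScalarTower R A M]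
    (a : A) : M →ₗ[R] M where
  toFun m := a • m
  map_add' := smul_add a
  map_smul' r m := (smul_comm r a m).symm

/-- The right `A`-module (i.e. `Aᵐᵒᵖ`-module) structure on the `R`-linear dual of a left
`A`-module `M`, given by `(aᵒᵖ • f) m = f (a • m)`. -/
instance dualModule (M : Type) [AddCommGroup M] [Module R M] [Module A M]
    [IsScalarTower R A M] : Module Aᵐᵒᵖ (M →ₗ[R] R) where
  smul a f := f.comp (actL R A M a.unop)
  one_smul f := by ext m; show f ((1 : Aᵐᵒᵖ).unop • m) = f m; simp
  mul_smul a b f := by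
    ext m
    show f ((a * b).unop • m) = f (b.unop • a.unop • m)
    simp [mul_smul]
  smul_zero a := rfl
  smul_add a f g := rfl
  add_smul a b f := by
    ext m
    show f ((a + b).unop • m) = f (a.unop • m) + f (b.unop • m)
    simp [add_smul]
  zero_smul f := by ext m; show f ((0 : Aᵐᵒᵖ).unop • m) = 0; simp

@[simp] lemma dualModule_smul_apply (M : Type) [AddCommGroup M] [Module R M] [Module A M]
    [IsScalarTower R A M] (a : Aᵐᵒᵖ) (f : M →ₗ[R] R) (m : M) :
    (a • f) m = f (a.unop • m) := rfl

instance dualTower (M : Type) [AddCommGroup M] [Module R M] [Module A M]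
    [IsScalarTower R A M] : IsScalarTower R Aᵐᵒᵖ (M →ₗ[R] R) := by
  constructor
  intro r a f
  ext m
  show f ((r • a).unop • m) = r • f (a.unop • m)
  rw [MulOpposite.unop_smul, smul_assoc, map_smul]

/-- The left `A`-module structure on the `R`-linear dual of a right `A`-module
(i.e. an `Aᵐᵒᵖ`-module) `M`, given by `(a • f) m = f (aᵒᵖ • m)`. -/
instance dualModule' (M : Type) [AddCommGroup M] [Module R M] [Module Aᵐᵒᵖ M]
    [IsScalarTower R Aᵐᵒᵖ M] : Module A (M →ₗ[R] R) where
  smul a f := f.comp (actL R Aᵐᵒᵖ M (MulOpposite.op a))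
  one_smul f := by ext m; show f (MulOpposite.op (1 : A) • m) = f m; simp
  mul_smul a b f := by
    ext m
    show f (MulOpposite.op (a * b) • m) = f (MulOpposite.op b • MulOpposite.op a • m)
    rw [MulOpposite.op_mul, mul_smul]
  smul_zero a := rfl
  smul_add a f g := rfl
  add_smul a b f := by
    ext m
    show f (MulOpposite.op (a + b) • m) = f (MulOpposite.op a • m) + f (MulOpposite.op b • m)
    rw [MulOpposite.op_add, add_smul, map_add]
  zero_smul f := by ext m; show f (MulOpposite.op (0 : A) • m) = 0; simp

@[simp] lemma dualModule'_smul_apply (M : Type) [AddCommGroup M] [Module R M] [Module Aᵐᵒᵖ M]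
    [IsScalarTower R Aᵐᵒᵖ M] (a : A) (f : M →ₗ[R] R) (m : M) :
    (a • f) m = f (MulOpposite.op a • m) := rfl

instance dualTower' (M : Type) [AddCommGroup M] [Module R M] [Module Aᵐᵒᵖ M]
    [IsScalarTower R Aᵐᵒᵖ M] : IsScalarTower R A (M →ₗ[R] R) := by
  constructor
  intro r a f
  ext m
  show f (MulOpposite.op (r • a) • m) = r • f (MulOpposite.op a • m)
  rw [MulOpposite.op_smul, smul_assoc, map_smul]

variable (Λ : Type) [Fintype Λ] [PartialOrder Λ]

/-- Data witnessing that `X` is isomorphic to `Δ(λ) ⊗_R U` for some `λ ∈ S` and some finitely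
generated projective `R`-module `U`. -/
structure TensorFactor (Δ : Λ → Type) [∀ l, AddCommGroup (Δ l)] [∀ l, Module R (Δ l)]
    [∀ l, Module A (Δ l)] [∀ l, IsScalarTower R A (Δ l)]
    (S : Set Λ) (X : Type) [AddCommGroup X] [Module A X] : Type 1 where
  lam : Λ
  mem : lam ∈ S
  U : ModuleCat.{0} R
  fin : Module.Finite R U
  proj : Module.Projective R U
  iso : X ≃ₗ[A] (TensorProduct R (Δ lam) U)

/-- `M` belongs to `F(Δ̃_S)`: it is a finitely generated `A`-module with a finite filtration
whose factors are of the form `Δ(λ) ⊗_R U`, `λ ∈ S`, `U` a finitely generated projective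
`R`-module. -/
def InFilt (Δ : Λ → Type) [∀ l, AddCommGroup (Δ l)] [∀ l, Module R (Δ l)]
    [∀ l, Module A (Δ l)] [∀ l, IsScalarTower R A (Δ l)]
    (S : Set Λ) (M : Type) [AddCommGroup M] [Module A M] : Prop :=
  Module.Finite A M ∧
  ∃ (n : ℕ) (c : Fin (n + 1) → Submodule A M), c 0 = ⊥ ∧ c (Fin.last n) = ⊤ ∧ Monotone c ∧
    ∀ i : Fin n, Nonempty (TensorFactor R A Λ Δ S
      (↥(c i.succ) ⧸ (Submodule.comap (c i.succ).subtype (c i.castSucc))))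

/-- Data witnessing that `X` is isomorphic to `F(λ)` for some `λ ∈ S`. -/
structure PlainFactor (F : Λ → Type) [∀ l, AddCommGroup (F l)] [∀ l, Module A (F l)]
    (S : Set Λ) (X : Type) [AddCommGroup X] [Module A X] : Type 1 where
  lam : Λ
  mem : lam ∈ S
  iso : X ≃ₗ[A] F lam

/-- `M` has a finite filtration with factors among the modules `F(λ)`, `λ ∈ S`. -/
def InFiltPlain (F : Λ → Type) [∀ l, AddCommGroup (F l)] [∀ l, Module A (F l)]
    (S : Set Λ) (M : Type) [AddCommGroup M] [Module A M] : Prop :=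
  Module.Finite A M ∧
  ∃ (n : ℕ) (c : Fin (n + 1) → Submodule A M), c 0 = ⊥ ∧ c (Fin.last n) = ⊤ ∧ Monotone c ∧
    ∀ i : Fin n, Nonempty (PlainFactor A Λ F S
      (↥(c i.succ) ⧸ (Submodule.comap (c i.succ).subtype (c i.castSucc))))

/-- `X` is a direct summand of `Y` (as `A`-modules). -/
def IsDirectSummand (X Y : Type) [AddCommGroup X] [Module A X] [AddCommGroup Y]
    [Module A Y] : Prop :=
  ∃ (i : X →ₗ[A] Y) (p : Y →ₗ[A] X), p.comp i = LinearMap.id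

/-- `X` belongs to the additive closure `add T`. -/
def InAdd (T : Type) [AddCommGroup T] [Module A T] (X : Type) [AddCommGroup X]
    [Module A X] : Prop :=
  ∃ n : ℕ, IsDirectSummand A X (Fin n → T)

/-- A split quasi-hereditary structure on the `R`-algebra `A` with standard modules
`Δ(λ)`, `λ ∈ Λ` (following Rouquier's module-theoretic definition). -/
structure SplitQH (Δ : Λ → Type) [∀ l, AddCommGroup (Δ l)] [∀ l, Module R (Δ l)]
    [∀ l, Module A (Δ l)] [∀ l, IsScalarTower R A (Δ l)] : Type 1 where
  algFin : Module.Finite R A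
  algProj : Module.Projective R A
  deltaFinA : ∀ l, Module.Finite A (Δ l)
  deltaFinR : ∀ l, Module.Finite R (Δ l)
  deltaProjR : ∀ l, Module.Projective R (Δ l)
  hom_le : ∀ l m : Λ, (∃ f : Δ l →ₗ[A] Δ m, f ≠ 0) → l ≤ m
  endIso : ∀ l, Nonempty ((Module.End A (Δ l)) ≃ₐ[R] R)
  P : Λ → ModuleCat.{0} A
  P_proj : ∀ l, Module.Projective A (P l)
  P_fin : ∀ l, Module.Finite A (P l)
  epi : ∀ l, (P l : Type) →ₗ[A] Δ l
  epi_surj : ∀ l, Function.Surjective (epi l)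
  ker_filt : ∀ l, InFilt R A Λ Δ {m | l < m} ↥(LinearMap.ker (epi l))
  add_gen : ∀ (Q : ModuleCat.{0} A), Module.Finite A Q → Module.Projective A Q →
    InAdd A (∀ l, (P l : Type)) Q

/-- Vanishing of `Ext^i_A(M, N)` (computed in the abelian category of `A`-modules). -/
def extVanish (M : Type) [AddCommGroup M] [Module A M] (N : Type) [AddCommGroup N]
    [Module A N] (i : ℕ) : Prop :=
  Subsingleton (((Ext ℤ (ModuleCat.{0} A) i).obj
    (Opposite.op (ModuleCat.of A M))).obj (ModuleCat.of A N))

/-- `∇` is a family of costandard modules for the split quasi-hereditary algebra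
`(A, {Δ(λ)})`: the `R`-linear duals `D∇(λ)` make `A^op` split quasi-hereditary (with the same
poset), and the `Ext`-orthogonality relations with the standard modules hold. -/
def IsCostandard (Δ : Λ → Type) [∀ l, AddCommGroup (Δ l)] [∀ l, Module R (Δ l)]
    [∀ l, Module A (Δ l)] [∀ l, IsScalarTower R A (Δ l)]
    (N : Λ → Type) [∀ l, AddCommGroup (N l)] [∀ l, Module R (N l)]
    [∀ l, Module A (N l)] [∀ l, IsScalarTower R A (N l)] : Prop :=
  Nonempty (SplitQH R Aᵐᵒᵖ Λ (fun l => (N l →ₗ[R] R))) ∧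
  (∀ l, Nonempty ((Δ l →ₗ[A] N l) ≃ₗ[R] R)) ∧
  (∀ l m, l ≠ m → ∀ f : Δ l →ₗ[A] N m, f = 0) ∧
  (∀ l m : Λ, ∀ i : ℕ, 0 < i → extVanish A (Δ l) (N m) i)

/-- A bundled family of costandard modules. -/
structure CostandardFamily (Δ : Λ → Type) [∀ l, AddCommGroup (Δ l)] [∀ l, Module R (Δ l)]
    [∀ l, Module A (Δ l)] [∀ l, IsScalarTower R A (Δ l)] : Type 1 where
  Nab : Λ → Type
  [acg : ∀ l, AddCommGroup (Nab l)]
  [modR : ∀ l, Module R (Nab l)]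
  [modA : ∀ l, Module A (Nab l)]
  [tower : ∀ l, IsScalarTower R A (Nab l)]
  cost : IsCostandard R A Λ Δ Nab

attribute [instance] CostandardFamily.acg CostandardFamily.modR CostandardFamily.modA
  CostandardFamily.tower

/-- `T` is a family of (partial) tilting modules forming a characteristic tilting module
`⊕ T(λ)`: each `T(λ)` admits an exact sequence `0 → Δ(λ) → T(λ) → X(λ) → 0` with
`X(λ) ∈ F(Δ̃_{μ<λ})` and an exact sequence `0 → Y(λ) → T(λ) → ∇(λ) → 0` with
`Y(λ) ∈ F(∇̃_{μ<λ})`. -/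
def IsCharTilting (Δ : Λ → Type) [∀ l, AddCommGroup (Δ l)] [∀ l, Module R (Δ l)]
    [∀ l, Module A (Δ l)] [∀ l, IsScalarTower R A (Δ l)]
    (N : Λ → Type) [∀ l, AddCommGroup (N l)] [∀ l, Module R (N l)]
    [∀ l, Module A (N l)] [∀ l, IsScalarTower R A (N l)]
    (T : Λ → Type) [∀ l, AddCommGroup (T l)] [∀ l, Module A (T l)] : Prop :=
  ∀ l : Λ,
    (∃ f : Δ l →ₗ[A] T l, Function.Injective f ∧
      InFilt R A Λ Δ {m | m < l} ((T l) ⧸ LinearMap.range f)) ∧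
    (∃ g : T l →ₗ[A] N l, Function.Surjective g ∧
      InFilt R A Λ N {m | m < l} ↥(LinearMap.ker g))

end Core

end

noncomputable section

section LiftingLemmas

variable {A : Type} [Ring A]

/-- A linear map vanishing on the kernel of a surjection factors through that surjection. -/
lemma exists_comp_eq_of_ker_le {X Y Z : Type} [AddCommGroup X] [Module A X]
    [AddCommGroup Y] [Module A Y] [AddCommGroup Z] [Module A Z]
    (p : X →ₗ[A] Y) (hp : Function.Surjective p) (g : X →ₗ[A] Z)
    (hg : ∀ x, p x = 0 → g x = 0) : ∃ h : Y →ₗ[A] Z, ∀ x, h (p x) = g x := by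
  refine ⟨((LinearMap.ker p).liftQ g fun x hx => hg x hx) ∘ₗ
    (p.quotKerEquivOfSurjective hp).symm.toLinearMap, fun x => ?_⟩
  have : (p.quotKerEquivOfSurjective hp).symm (p x) = (LinearMap.ker p).mkQ x := by
    rw [LinearEquiv.symm_apply_eq]; rfl
  rw [LinearMap.comp_apply, LinearEquiv.coe_coe, this]
  rfl

/-- Every extension of `X` by (a pushout to) `N` splits: any map to `N` from the kernel of a
surjection onto `X` extends. This is an elementary form of `Ext¹(X, N) = 0`. -/
def ExtendsFromKernels (A : Type) [Ring A] (N : Type) [AddCommGroup N] [Module A N]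
    (X : Type) [AddCommGroup X] [Module A X] : Prop :=
  ∀ (E : Type) [AddCommGroup E] [Module A E] (p : E →ₗ[A] X), Function.Surjective p →
    ∀ g : LinearMap.ker p →ₗ[A] N, ∃ h : E →ₗ[A] N, ∀ k : LinearMap.ker p, h k = g k

lemma extendsFromKernels_of_extVanish {M N : Type} [AddCommGroup M] [Module A M]
    [AddCommGroup N] [Module A N] (hext : extVanish A M N 1) : ExtendsFromKernels A N M := by
  intro E _ _ p hp g
  let P : ProjectiveResolution (ModuleCat.of A M) := ProjectiveResolution.of _
  let π : P.complex.X 0 ⟶ ModuleCat.of A M := P.π.f 0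
  have hπ : Epi π := inferInstanceAs (Epi (P.π.f 0))
  have hπs : Function.Surjective π := (ModuleCat.epi_iff_surjective π).1 hπ
  obtain ⟨q, hq⟩ : ∃ q : P.complex.X 0 ⟶ ModuleCat.of A E, q ≫ ModuleCat.ofHom p = π := by
    have : Epi (ModuleCat.ofHom p) := (ModuleCat.epi_iff_surjective _).2 hp
    exact ⟨Projective.factorThru π (ModuleCat.ofHom p), Projective.factorThru_comp _ _⟩
  have hq' : ∀ x, p (q x) = π x := fun x => by rw [← hq]; rfl
  have hdπ : ∀ x, π (P.complex.d 1 0 x) = 0 := fun x => by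
    have := congrArg (fun f => f.hom x) P.complex_d_comp_π_f_zero
    exact this
  have hex : ∀ x, π x = 0 → ∃ y, P.complex.d 1 0 y = x := by
    have := P.exact₀
    rw [ShortComplex.moduleCat_exact_iff] at this
    exact this
  let dK : P.complex.X 1 →ₗ[A] LinearMap.ker p :=
    (q.hom ∘ₗ (P.complex.d 1 0).hom).codRestrict _ fun x => by
      change p (q (P.complex.d 1 0 x)) = 0
      rw [hq', hdπ]
  let c : P.complex.X 1 ⟶ ModuleCat.of A N := ModuleCat.ofHom (g ∘ₗ dK)
  have hc : P.complex.d 2 1 ≫ c = 0 := by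
    ext x
    have h0 : P.complex.d 1 0 (P.complex.d 2 1 x) = 0 := by
      have := congrArg (fun f => f.hom x) (P.complex.d_comp_d 2 1 0)
      exact this
    have : dK (P.complex.d 2 1 x) = 0 := by
      ext
      change q (P.complex.d 1 0 (P.complex.d 2 1 x)) = 0
      rw [h0, map_zero]
    change g (dK (P.complex.d 2 1 x)) = 0
    rw [this, map_zero]
  have hzero : Limits.IsZero
      ((P.complex.linearYonedaObj ℤ (ModuleCat.of A N)).homology 1) := by
    refine Limits.IsZero.of_iso ?_ (P.isoExt (R := ℤ) 1 (ModuleCat.of A N)).symm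
    have : Subsingleton (((Ext ℤ (ModuleCat.{0} A) 1).obj
      (Opposite.op (ModuleCat.of A M))).obj (ModuleCat.of A N)) := hext
    exact ModuleCat.isZero_of_subsingleton _
  rw [← HomologicalComplex.exactAt_iff_isZero_homology,
    HomologicalComplex.exactAt_iff' _ 0 1 2 (by simp) (by simp),
    ShortComplex.moduleCat_exact_iff] at hzero
  obtain ⟨b, hb⟩ : ∃ b : P.complex.X 0 ⟶ ModuleCat.of A N, P.complex.d 1 0 ≫ b = c :=
    hzero c hc
  have hb' : ∀ x, b (P.complex.d 1 0 x) = g (dK x) := fun x => by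
    have := congrArg (fun f => f.hom x) hb
    exact this
  obtain ⟨h, hh⟩ := exists_comp_eq_of_ker_le
    ((LinearMap.ker p).subtype.coprod q.hom) (fun e => by
      obtain ⟨x, hx⟩ := hπs (p e)
      refine ⟨(⟨e - q x, ?_⟩, x), ?_⟩
      · rw [LinearMap.mem_ker, map_sub, hq', hx, sub_self]
      · simp)
    (g.coprod b.hom) (by
      rintro ⟨k, x⟩ hkx
      simp only [LinearMap.coprod_apply, Submodule.subtype_apply] at hkx ⊢
      have hx : π x = 0 := by
        have := congrArg p hkx
        rwa [map_add, k.2, zero_add, hq', map_zero] at this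
      obtain ⟨y, rfl⟩ := hex x hx
      have hk : k = - dK y := by
        ext
        exact eq_neg_of_add_eq_zero_left hkx
      change g k + b (P.complex.d 1 0 y) = 0
      rw [hb', hk, map_neg, neg_add_cancel])
  refine ⟨h, fun k => ?_⟩
  simpa using hh (k, 0)

end LiftingLemmas

section Duality

variable {R : Type} [CommRing R] {A : Type} [Ring A]
variable {D N : Type} [AddCommGroup D] [Module R D] [Module A D] [SMulCommClass A R D]
  [AddCommGroup N] [Module A N]

/-- The pairing `Hom(X, N) × Hom(D, X) → Hom(D, N) → R` induced by `θ` identifies `Hom(X, N)`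
with the `R`-dual of `Hom(D, X)`, where `R` acts on `Hom(D, X)` through `D`. -/
structure PairsPerfectly (θ : (D →ₗ[A] N) →+ R) (X : Type) [AddCommGroup X] [Module A X] :
    Prop where
  eq_zero : ∀ g : X →ₗ[A] N, (∀ f : D →ₗ[A] X, θ (g ∘ₗ f) = 0) → g = 0
  exists_eq : ∀ φ : (D →ₗ[A] X) →+ R,
    (∀ (r : R) (f : D →ₗ[A] X), φ (f ∘ₗ (r • LinearMap.id : D →ₗ[A] D)) = r * φ f) →
    ∃ g : X →ₗ[A] N, ∀ f : D →ₗ[A] X, θ (g ∘ₗ f) = φ f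

/-- The class of modules with vanishing `Ext¹(-, N)` which pair perfectly. -/
structure Dualizes (θ : (D →ₗ[A] N) →+ R) (X : Type) [AddCommGroup X] [Module A X] :
    Prop extends PairsPerfectly θ X where
  extends_kernels : ExtendsFromKernels A N X

/-- Composition with a fixed map, as an additive map on homomorphism groups. -/
def compAddHom {X Y : Type} [AddCommGroup X] [Module A X] [AddCommGroup Y] [Module A Y]
    (i : X →ₗ[A] Y) : (D →ₗ[A] X) →+ (D →ₗ[A] Y) where
  toFun f := i ∘ₗ f
  map_zero' := LinearMap.comp_zero i
  map_add' f g := LinearMap.comp_add f g i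

variable {θ : (D →ₗ[A] N) →+ R}

namespace Dualizes

lemma of_retract {X Y : Type} [AddCommGroup X] [Module A X] [AddCommGroup Y] [Module A Y]
    (hY : Dualizes θ Y) (i : X →ₗ[A] Y) (r : Y →ₗ[A] X) (hri : r ∘ₗ i = LinearMap.id) :
    Dualizes θ X where
  eq_zero g hg := by
    have : g ∘ₗ r = 0 := hY.eq_zero _ fun f => hg (r ∘ₗ f)
    rw [← LinearMap.comp_id g, ← hri, ← LinearMap.comp_assoc, this, LinearMap.zero_comp]
  exists_eq φ hφ := by
    obtain ⟨g, hg⟩ := hY.exists_eq (φ.comp (compAddHom r)) fun s f => hφ s (r ∘ₗ f)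
    refine ⟨g ∘ₗ i, fun f => (hg (i ∘ₗ f)).trans ?_⟩
    change φ ((r ∘ₗ i) ∘ₗ f) = φ f
    rw [hri, LinearMap.id_comp]
  extends_kernels := by
    intro E _ _ p hp g
    have hri' : ∀ x, r (i x) = x := fun x => LinearMap.congr_fun hri x
    let E' : Submodule A (E × Y) := LinearMap.ker (p.coprod (-r))
    have hE' : ∀ z : E × Y, z ∈ E' ↔ p z.1 = r z.2 := fun z => by
      simp [E', LinearMap.mem_ker, ← sub_eq_add_neg, sub_eq_zero]
    let p' : E' →ₗ[A] Y := LinearMap.snd A E Y ∘ₗ E'.subtype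
    have hp' : Function.Surjective p' := fun y => by
      obtain ⟨e, he⟩ := hp (r y)
      exact ⟨⟨(e, y), (hE' _).2 he⟩, rfl⟩
    let t : LinearMap.ker p' →ₗ[A] LinearMap.ker p :=
      ((LinearMap.fst A E Y ∘ₗ E'.subtype) ∘ₗ (LinearMap.ker p').subtype).codRestrict _
        fun z => by
          change p z.1.1.1 = 0
          rw [(hE' _).1 z.1.2]
          have : z.1.1.2 = 0 := z.2
          rw [this, map_zero]
    obtain ⟨h, hh⟩ := hY.extends_kernels E' p' hp' (g ∘ₗ t)
    let s : E →ₗ[A] E' := (LinearMap.prod LinearMap.id (i ∘ₗ p)).codRestrict _ fun e => by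
      rw [hE']
      exact (hri' _).symm
    refine ⟨h ∘ₗ s, fun k => ?_⟩
    have hk : s k ∈ LinearMap.ker p' := by
      change i (p k) = 0
      rw [k.2, map_zero]
    exact hh ⟨s k, hk⟩

lemma of_linearEquiv {X Y : Type} [AddCommGroup X] [Module A X] [AddCommGroup Y] [Module A Y]
    (hY : Dualizes θ Y) (e : X ≃ₗ[A] Y) : Dualizes θ X :=
  hY.of_retract e.toLinearMap e.symm.toLinearMap (by ext; simp)

lemma of_subsingleton (X : Type) [AddCommGroup X] [Module A X] [Subsingleton X] :
    Dualizes θ X where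
  eq_zero g _ := by
    ext x
    rw [Subsingleton.elim x 0, map_zero, map_zero]
  exists_eq φ _ := ⟨0, fun f => by
    have : f = 0 := LinearMap.ext fun _ => Subsingleton.elim _ _
    rw [this, map_zero, LinearMap.comp_zero, map_zero]⟩
  extends_kernels := by
    intro E _ _ p _ g
    exact ⟨g ∘ₗ LinearMap.id.codRestrict _ fun _ => Subsingleton.elim _ _, fun _ => rfl⟩

lemma of_exact [Module.Projective A D]
    (hθ : ∀ (r : R) (g : D →ₗ[A] N), θ (g ∘ₗ (r • LinearMap.id : D →ₗ[A] D)) = r * θ g)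
    {X' X X'' : Type} [AddCommGroup X'] [Module A X']
    [AddCommGroup X] [Module A X] [AddCommGroup X''] [Module A X'']
    (i : X' →ₗ[A] X) (p : X →ₗ[A] X'') (hi : Function.Injective i)
    (hp : Function.Surjective p) (hip : Function.Exact i p)
    (h' : Dualizes θ X') (h'' : Dualizes θ X'') : Dualizes θ X := by
  have hpi : ∀ x, p (i x) = 0 := hip.apply_apply_eq_zero
  have hlift : ∀ f : D →ₗ[A] X, p ∘ₗ f = 0 → ∃ f' : D →ₗ[A] X', i ∘ₗ f' = f := fun f hf => by
    have hf' : ∀ d, f d ∈ LinearMap.range i := fun d => (hip _).1 (LinearMap.congr_fun hf d)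
    refine ⟨(LinearEquiv.ofInjective i hi).symm.toLinearMap ∘ₗ f.codRestrict _ hf', ?_⟩
    ext d
    exact congrArg Subtype.val ((LinearEquiv.ofInjective i hi).apply_symm_apply ⟨f d, hf' d⟩)
  have hext : ∀ g : X' →ₗ[A] N, ∃ h : X →ₗ[A] N, h ∘ₗ i = g := fun g => by
    have hk : ∀ k : LinearMap.ker p, k.1 ∈ LinearMap.range i := fun k => (hip _).1 k.2
    obtain ⟨h, hh⟩ := h''.extends_kernels X p hp (g ∘ₗ
      (LinearEquiv.ofInjective i hi).symm.toLinearMap ∘ₗ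
        (LinearMap.ker p).subtype.codRestrict _ hk)
    refine ⟨h, LinearMap.ext fun x => (hh ⟨i x, hpi x⟩).trans (congrArg g ?_)⟩
    exact (LinearEquiv.ofInjective i hi).symm_apply_apply x
  refine ⟨⟨fun g hg => ?_, fun φ hφ => ?_⟩, ?_⟩
  · have hgi : g ∘ₗ i = 0 := h'.eq_zero _ fun f => hg (i ∘ₗ f)
    obtain ⟨g', hg'⟩ := exists_comp_eq_of_ker_le p hp g fun x hx => by
      obtain ⟨y, rfl⟩ := (hip x).1 hx
      exact LinearMap.congr_fun hgi y
    have : g' = 0 := h''.eq_zero _ fun f => by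
      obtain ⟨f', rfl⟩ := Module.projective_lifting_property p f hp
      rw [← LinearMap.comp_assoc, show g' ∘ₗ p = g from LinearMap.ext hg']
      exact hg f'
    ext x
    rw [← hg', this]
    rfl
  · obtain ⟨g', hg'⟩ := h'.exists_eq (φ.comp (compAddHom i)) fun s f => hφ s (i ∘ₗ f)
    obtain ⟨h, rfl⟩ := hext g'
    let ψ : (D →ₗ[A] X) →+ R := φ - θ.comp (compAddHom h)
    have hψ : ∀ f, ψ f = φ f - θ (h ∘ₗ f) := fun _ => rfl
    have hψ0 : ∀ f, p ∘ₗ f = 0 → ψ f = 0 := fun f hf => by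
      obtain ⟨f', rfl⟩ := hlift f hf
      rw [hψ, sub_eq_zero]
      exact (hg' f').symm
    have hψs : ∀ (s : R) f, ψ (f ∘ₗ (s • LinearMap.id : D →ₗ[A] D)) = s * ψ f := fun s f => by
      rw [hψ, hψ, hφ, ← LinearMap.comp_assoc, hθ, mul_sub]
    choose L hL using fun f : D →ₗ[A] X'' => Module.projective_lifting_property p f hp
    have hψL : ∀ f f', p ∘ₗ f = f' → ψ (L f') = ψ f := fun f f' hf => by
      rw [← sub_eq_zero, ← map_sub]
      exact hψ0 _ (by rw [LinearMap.comp_sub, hL, hf, sub_self])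
    obtain ⟨g'', hg''⟩ := h''.exists_eq
      (AddMonoidHom.mk' (fun f => ψ (L f)) fun f f' => by
        rw [← map_add]
        exact hψL _ _ (by rw [LinearMap.comp_add, hL, hL]))
      fun s f => (hψL (L f ∘ₗ (s • LinearMap.id : D →ₗ[A] D)) _ (by
        rw [← LinearMap.comp_assoc, hL])).trans (hψs s _)
    refine ⟨h + g'' ∘ₗ p, fun f => ?_⟩
    rw [LinearMap.add_comp, map_add, LinearMap.comp_assoc, hg'' (p ∘ₗ f)]
    change _ + ψ (L (p ∘ₗ f)) = _
    rw [hψL f _ rfl, hψ, add_sub_cancel]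
  · intro E _ _ q hq g
    let E' : Submodule A E := LinearMap.ker (p ∘ₗ q)
    have hE' : ∀ e : E', q e ∈ LinearMap.range i := fun e => (hip _).1 e.2
    let j := LinearEquiv.ofInjective i hi
    have hj : ∀ y, i (j.symm y) = y := fun y => congrArg Subtype.val (j.apply_symm_apply y)
    let q' : E' →ₗ[A] X' := j.symm.toLinearMap ∘ₗ (q ∘ₗ E'.subtype).codRestrict _ hE'
    have hq' : ∀ e, i (q' e) = q e := fun e => hj ⟨q e, hE' e⟩
    have hq's : Function.Surjective q' := fun x => by
      obtain ⟨e, he⟩ := hq (i x)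
      refine ⟨⟨e, ?_⟩, hi ?_⟩
      · change p (q e) = 0
        rw [he, hpi]
      · rw [hq', he]
    obtain ⟨h₁, hh₁⟩ := h'.extends_kernels E' q' hq's (g ∘ₗ
      (E'.subtype ∘ₗ (LinearMap.ker q').subtype).codRestrict _ fun e => by
        change q e.1 = 0
        rw [← hq', e.2, map_zero])
    obtain ⟨h₂, hh₂⟩ := h''.extends_kernels E (p ∘ₗ q) (hp.comp hq) h₁
    refine ⟨h₂, fun k => ?_⟩
    have hk : k.1 ∈ E' := by
      change p (q k) = 0
      rw [k.2, map_zero]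
    refine (hh₂ ⟨k, hk⟩).trans (hh₁ ⟨⟨k, hk⟩, hi ?_⟩)
    rw [hq', map_zero]
    exact k.2

lemma pi [Module.Projective A D]
    (hθ : ∀ (r : R) (g : D →ₗ[A] N), θ (g ∘ₗ (r • LinearMap.id : D →ₗ[A] D)) = r * θ g)
    (ι : Type) [Fintype ι] :
    ∀ (X : ι → Type) [∀ i, AddCommGroup (X i)] [∀ i, Module A (X i)],
      (∀ i, Dualizes θ (X i)) → Dualizes θ (∀ i, X i) := by
  refine Fintype.induction_empty_option (P := fun ι _ => ∀ (X : ι → Type)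
    [∀ i, AddCommGroup (X i)] [∀ i, Module A (X i)],
      (∀ i, Dualizes θ (X i)) → Dualizes θ (∀ i, X i)) ?_ ?_ ?_ ι
  · intro α β _ e ih X _ _ hX
    exact (ih (fun a => X (e a)) fun a => hX (e a)).of_linearEquiv
      (LinearEquiv.piCongrLeft A X e).symm
  · intro X _ _ _
    exact of_subsingleton _
  · intro α _ ih X _ _ hX
    refine of_exact hθ (LinearMap.pi fun o => match o with
        | none => 0
        | some a => LinearMap.proj a) (LinearMap.proj none)
      ?_ ?_ ?_ (ih (fun a => X (some a)) fun a => hX (some a)) (hX none)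
    · intro x y hxy
      funext a
      exact congrFun hxy (some a)
    · classical
      exact fun x => ⟨Pi.single none x, by simp⟩
    · intro x
      constructor
      · intro hx
        refine ⟨fun a => x (some a), ?_⟩
        funext o
        cases o with
        | none => exact hx.symm
        | some a => rfl
      · rintro ⟨y, rfl⟩
        rfl

lemma tensorProduct [Algebra R A] [Module.Projective A D]
    (hθ : ∀ (r : R) (g : D →ₗ[A] N), θ (g ∘ₗ (r • LinearMap.id : D →ₗ[A] D)) = r * θ g)
    {X U : Type} [AddCommGroup X] [Module R X] [Module A X]
    [IsScalarTower R A X] [AddCommGroup U] [Module R U] [Module.Finite R U]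
    [Module.Projective R U] (hX : Dualizes θ X) : Dualizes θ (X ⊗[R] U) := by
  obtain ⟨n, f, g, -, -, hfg⟩ := Module.Finite.exists_comp_eq_id_of_projective R U
  refine (pi hθ (Fin n) (fun _ => X) fun _ => hX).of_retract
    (LinearMap.pi fun k => (TensorProduct.AlgebraTensorModule.rid R A X).toLinearMap ∘ₗ
      TensorProduct.AlgebraTensorModule.lTensor A X (LinearMap.proj k ∘ₗ g))
    (∑ k, (TensorProduct.AlgebraTensorModule.lTensor A X
      (LinearMap.toSpanSingleton R U (f (Pi.single k 1))) ∘ₗ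
        (TensorProduct.AlgebraTensorModule.rid R A X).symm.toLinearMap) ∘ₗ LinearMap.proj k) ?_
  ext x u
  have hu : ∑ k, g u k • f (Pi.single k 1) = u := by
    have hgu : g u = ∑ k, g u k • Pi.single k (1 : R) := by
      ext k
      simp [Finset.sum_apply, Pi.single_apply]
    conv_rhs => rw [← LinearMap.id_apply (R := R) u, ← hfg, LinearMap.comp_apply, hgu]
    simp only [map_sum, map_smul]
  conv_rhs => rw [← hu]
  simp [TensorProduct.smul_tmul]

lemma of_inFilt [Algebra R A] [Module.Projective A D]
    (hθ : ∀ (r : R) (g : D →ₗ[A] N), θ (g ∘ₗ (r • LinearMap.id : D →ₗ[A] D)) = r * θ g)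
    {Λ : Type} [Fintype Λ] [PartialOrder Λ]
    {Δ : Λ → Type} [∀ l, AddCommGroup (Δ l)] [∀ l, Module R (Δ l)]
    [∀ l, Module A (Δ l)] [∀ l, IsScalarTower R A (Δ l)] {S : Set Λ}
    {M : Type} [AddCommGroup M] [Module A M] (hΔ : ∀ m, Dualizes θ (Δ m))
    (hM : InFilt R A Λ Δ S M) : Dualizes θ M := by
  obtain ⟨-, n, c, hbot, htop, hmono, hfac⟩ := hM
  have key : ∀ k, Dualizes θ (c k) := by
    intro k
    induction k using Fin.induction with
    | zero =>
      rw [hbot]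
      exact of_subsingleton _
    | succ k ih =>
      obtain ⟨F⟩ := hfac k
      have := F.fin
      have := F.proj
      have hle : c k.castSucc ≤ c k.succ := hmono (Fin.castSucc_lt_succ).le
      refine of_exact hθ (Submodule.inclusion hle) (Submodule.mkQ _)
        (Submodule.inclusion_injective hle) (Submodule.mkQ_surjective _) ?_ ih
        (((hΔ F.lam).tensorProduct hθ).of_linearEquiv F.iso)
      rw [LinearMap.exact_iff, Submodule.ker_mkQ, Submodule.range_inclusion]
  have := key (Fin.last n)
  rw [htop] at this
  exact this.of_linearEquiv Submodule.topEquiv.symm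

end Dualizes

end Duality

/-- The standard module of a maximal weight is projective. -/
lemma SplitQH.projective_of_isMax {R : Type} [CommRing R] {A : Type} [Ring A] [Algebra R A]
    {Λ : Type} [Fintype Λ] [PartialOrder Λ]
    {Δ : Λ → Type} [∀ l, AddCommGroup (Δ l)] [∀ l, Module R (Δ l)]
    [∀ l, Module A (Δ l)] [∀ l, IsScalarTower R A (Δ l)]
    (h : SplitQH R A Λ Δ) {l : Λ} (hmax : ∀ m : Λ, l ≤ m → m = l) :
    Module.Projective A (Δ l) := by
  obtain ⟨-, n, c, hbot, htop, -, hfac⟩ := h.ker_filt l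
  obtain rfl : n = 0 := by
    by_contra hn
    obtain ⟨F⟩ := hfac ⟨0, Nat.pos_of_ne_zero hn⟩
    have hF : l < F.lam := F.mem
    exact hF.ne' (hmax _ hF.le)
  have hker : LinearMap.ker (h.epi l) = ⊥ := by
    have h01 : (⊤ : Submodule A (LinearMap.ker (h.epi l))) = ⊥ := htop.symm.trans hbot
    rw [Submodule.eq_bot_iff]
    intro x hx
    have : (⟨x, hx⟩ : LinearMap.ker (h.epi l)) ∈
      (⊤ : Submodule A (LinearMap.ker (h.epi l))) := trivial
    rw [h01, Submodule.mem_bot] at this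
    exact congrArg Subtype.val this
  have := h.P_proj l
  exact Module.Projective.of_equiv
    (LinearEquiv.ofBijective (h.epi l) ⟨LinearMap.ker_eq_bot.1 hker, h.epi_surj l⟩)

/-- If `λ ∈ Λ` is maximal, then `D Hom_A(Δ(λ), A) ≅ ∇(λ)` as `A`-modules,
where `Hom_A(Δ(λ), A)` is a right `A`-module and `D = Hom_R(−, R)`. -/
theorem dual_hom_delta_iso_costandard
    (R : Type) [CommRing R] [IsNoetherianRing R]
    (A : Type) [Ring A] [Algebra R A]
    (Λ : Type) [Fintype Λ] [PartialOrder Λ]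
    (Δ : Λ → Type) [∀ l, AddCommGroup (Δ l)] [∀ l, Module R (Δ l)]
    [∀ l, Module A (Δ l)] [∀ l, IsScalarTower R A (Δ l)]
    (Nb : Λ → Type) [∀ l, AddCommGroup (Nb l)] [∀ l, Module R (Nb l)]
    [∀ l, Module A (Nb l)] [∀ l, IsScalarTower R A (Nb l)]
    (h : SplitQH R A Λ Δ) (hc : IsCostandard R A Λ Δ Nb)
    (l : Λ) (hmax : ∀ m : Λ, l ≤ m → m = l) :
    Nonempty ((((Δ l →ₗ[A] A) →ₗ[R] R)) ≃ₗ[A] Nb l) := by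
  obtain ⟨-, hdiag, hoff, hext⟩ := hc
  obtain ⟨θ⟩ := hdiag l
  obtain ⟨e⟩ := h.endIso l
  have := h.projective_of_isMax hmax
  let θ' : (Δ l →ₗ[A] Nb l) →+ R := θ.toLinearMap.toAddMonoidHom
  have hend : ∀ f : Δ l →ₗ[A] Δ l, ∃ r : R, f = r • LinearMap.id := fun f =>
    ⟨e f, e.injective (by
      have := e.commutes (e f)
      rw [Algebra.algebraMap_eq_smul_one] at this
      exact this.symm)⟩
  have hsmul : ∀ (r : R) (g : Δ l →ₗ[A] Nb l),
      θ (g ∘ₗ (r • LinearMap.id : Δ l →ₗ[A] Δ l)) = r * θ g :=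
    fun r g => by
      rw [← smul_eq_mul, ← map_smul]
      congr 1
      ext x
      exact g.map_smul_of_tower r x
  have hΔ : ∀ m, Dualizes θ' (Δ m) := by
    intro m
    refine ⟨?_, extendsFromKernels_of_extVanish (hext m l 1 one_pos)⟩
    by_cases hm : m = l
    · subst hm
      refine ⟨fun g hg => θ.map_eq_zero_iff.1 (hg LinearMap.id), fun φ hφ => ?_⟩
      refine ⟨θ.symm (φ LinearMap.id), fun f => ?_⟩
      obtain ⟨r, rfl⟩ := hend f
      refine (hsmul _ _).trans ?_
      rw [θ.apply_symm_apply, ← hφ, LinearMap.id_comp]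
    · refine ⟨fun g _ => hoff m l hm g, fun φ _ => ⟨0, fun f => ?_⟩⟩
      have hf : f = 0 := by
        by_contra hf
        exact hm (hmax m (h.hom_le l m ⟨f, hf⟩))
      rw [hf, map_zero, LinearMap.comp_zero, map_zero]
  have hP : ∀ m, Dualizes θ' (h.P m) := fun m =>
    Dualizes.of_exact hsmul (LinearMap.ker (h.epi m)).subtype (h.epi m) Subtype.val_injective
      (h.epi_surj m) (LinearMap.exact_subtype_ker_map _)
      (Dualizes.of_inFilt hsmul hΔ (h.ker_filt m)) (hΔ m)
  have hA : Dualizes θ' A := by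
    obtain ⟨n, i, p, hpi⟩ := h.add_gen (ModuleCat.of A A)
      (inferInstanceAs (Module.Finite A A)) (inferInstanceAs (Module.Projective A A))
    exact (Dualizes.pi hsmul (Fin n) _ fun _ => Dualizes.pi hsmul Λ _ hP).of_retract i p hpi
  let Φ : Nb l →ₗ[A] ((Δ l →ₗ[A] A) →ₗ[R] R) :=
    { toFun := fun x =>
        { toFun := fun f => θ (LinearMap.toSpanSingleton A (Nb l) x ∘ₗ f)
          map_add' := fun f g => by rw [LinearMap.comp_add, map_add]
          map_smul' := fun r f => by
            rw [RingHom.id_apply, ← map_smul]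
            congr 1
            ext d
            simp }
      map_add' := fun x y => by
        ext f
        change θ _ = θ _ + θ _
        rw [← map_add]
        congr 1
        ext d
        simp
      map_smul' := fun a x => by
        ext f
        change θ _ = θ _
        congr 1
        ext d
        exact (mul_smul (f d) a x).symm }
  refine ⟨(LinearEquiv.ofBijective Φ ⟨?_, fun φ => ?_⟩).symm⟩
  · rw [← LinearMap.ker_eq_bot, Submodule.eq_bot_iff]
    intro x hx
    have := hA.eq_zero (LinearMap.toSpanSingleton A (Nb l) x) fun f => LinearMap.congr_fun hx f
    simpa using LinearMap.congr_fun this 1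
  · obtain ⟨g, hg⟩ := hA.exists_eq φ.toAddMonoidHom fun r f => by
      change φ _ = r * φ f
      rw [← smul_eq_mul, ← map_smul]
      congr 1
      ext d
      exact f.map_smul_of_tower r d
    refine ⟨g 1, LinearMap.ext fun f => Eq.trans ?_ (hg f)⟩
    change θ _ = θ _
    congr 1
    ext d
    simp [← map_smul]

end
end

section
/- Let (A, {Δ(λ)}) be a split quasi-hereditary algebra over a commutative Noetherian ring R, with costandard modules ∇(λ). If M lies in F(Δ̃) (modules with a finite filtration whose factors are of the form Δ(λ) ⊗_R U with U ∈ R-proj) and N lies in F(∇̃), then Ext^i_A(M, N) = 0 for all i > 0, and both M and N are projective as R-modules. -/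
open scoped TensorProduct
open CategoryTheory

section Retract

variable {A : Type} [Ring A]

/-- The identity of `X` is a finite sum of endomorphisms factoring through `Y`. -/
def FactorsThrough (A : Type) [Ring A] (X Y : Type) [AddCommGroup X] [Module A X]
    [AddCommGroup Y] [Module A Y] : Prop :=
  ∃ (n : ℕ) (a : Fin n → X →ₗ[A] Y) (b : Fin n → Y →ₗ[A] X),
    ∑ j, (b j).comp (a j) = LinearMap.id

variable {X Y : Type} [AddCommGroup X] [Module A X] [AddCommGroup Y] [Module A Y]

lemma InAdd.factorsThrough (h : InAdd A Y X) : FactorsThrough A X Y := by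
  obtain ⟨n, i, p, hp⟩ := h
  refine ⟨n, fun j => (LinearMap.proj j).comp i,
    fun j => p.comp (LinearMap.single A (fun _ => Y) j), ?_⟩
  ext x
  have hx := LinearMap.congr_fun hp x
  simp only [LinearMap.comp_apply, LinearMap.id_apply] at hx
  simp only [LinearMap.sum_apply, LinearMap.comp_apply, LinearMap.proj_apply,
    LinearMap.id_apply, LinearMap.single_apply]
  rw [← map_sum, Finset.univ_sum_single, hx]

lemma factorsThrough_tensor (R : Type) [CommRing R] [Algebra R A] [Module R Y]
    [IsScalarTower R A Y] (U : Type) [AddCommGroup U] [Module R U] [Module.Finite R U]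
    [Module.Projective R U] : FactorsThrough A (Y ⊗[R] U) Y := by
  obtain ⟨n, f, g, -, -, hfg⟩ := Module.Finite.exists_comp_eq_id_of_projective R U
  refine ⟨n,
    fun j => (TensorProduct.AlgebraTensorModule.rid R A Y).toLinearMap.comp
      (TensorProduct.AlgebraTensorModule.map LinearMap.id ((LinearMap.proj j).comp g)),
    fun j => (TensorProduct.AlgebraTensorModule.mk R A Y U).flip (f (Pi.single j 1)), ?_⟩
  ext y u
  have hu : ∑ j, g u j • f (Pi.single j 1) = u := by
    conv_rhs => rw [← LinearMap.id_apply (R := R) u, ← hfg, LinearMap.comp_apply,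
      ← Finset.univ_sum_single (g u), map_sum]
    refine Finset.sum_congr rfl fun j _ => ?_
    rw [← map_smul, ← Pi.single_smul', smul_eq_mul, mul_one]
  simp only [LinearMap.sum_apply, LinearMap.comp_apply, LinearMap.id_apply,
    TensorProduct.AlgebraTensorModule.curry_apply, TensorProduct.curry_apply,
    LinearMap.restrictScalars_apply,
    TensorProduct.AlgebraTensorModule.map_tmul, LinearMap.proj_apply,
    LinearEquiv.coe_coe, TensorProduct.AlgebraTensorModule.rid_tmul]
  change ∑ j, (g u j • y) ⊗ₜ[R] f (Pi.single j 1) = y ⊗ₜ[R] u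
  simp only [TensorProduct.smul_tmul]
  rw [← TensorProduct.tmul_sum, hu]

end Retract

set_option linter.unusedSectionVars false

section Filtration

variable {R : Type} [CommRing R] {A : Type} [Ring A] [Algebra R A] {Λ : Type} [Fintype Λ]
  [PartialOrder Λ] {Δ : Λ → Type} [∀ l, AddCommGroup (Δ l)] [∀ l, Module R (Δ l)]
  [∀ l, Module A (Δ l)] [∀ l, IsScalarTower R A (Δ l)]

/-- A property of `A`-modules which is invariant under isomorphism, closed under extensions and
satisfied by the modules `Δ(λ) ⊗ U` holds for all filtered modules. -/
theorem InFilt.induction (Q : ∀ (X : Type) [AddCommGroup X] [Module A X], Prop)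
    (iso : ∀ (X Y : Type) [AddCommGroup X] [Module A X] [AddCommGroup Y] [Module A Y],
      (X ≃ₗ[A] Y) → Q X → Q Y)
    (zero : ∀ (X : Type) [AddCommGroup X] [Module A X], Subsingleton X → Q X)
    (extension : ∀ (X : Type) [AddCommGroup X] [Module A X] (S : Submodule A X),
      Q S → Q (X ⧸ S) → Q X)
    (factor : ∀ (l : Λ) (U : Type) [AddCommGroup U] [Module R U] [Module.Finite R U]
      [Module.Projective R U], Q (Δ l ⊗[R] U))
    {S : Set Λ} {M : Type} [AddCommGroup M] [Module A M] (hM : InFilt R A Λ Δ S M) : Q M := by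
  obtain ⟨-, n, c, h0, hn, hmono, hfac⟩ := hM
  have key : ∀ i : Fin (n + 1), Q (c i) := by
    intro i
    induction i using Fin.induction with
    | zero =>
      apply zero
      rw [h0]
      infer_instance
    | succ i ih =>
      refine extension _ (Submodule.comap (c i.succ).subtype (c i.castSucc)) ?_ ?_
      · exact iso _ _ (Submodule.comapSubtypeEquivOfLe
          (hmono (Fin.castSucc_lt_succ (i := i)).le)).symm ih
      · obtain ⟨t⟩ := hfac i
        have := t.fin
        have := t.proj
        exact iso _ _ t.iso.symm (factor t.lam t.U)
  have htop := key (Fin.last n)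
  rw [hn] at htop
  exact iso _ _ Submodule.topEquiv htop

end Filtration

section FiniteProjective

variable {R : Type} [CommRing R]

lemma finite_projective_of_exact {X Y Z : Type} [AddCommGroup X] [AddCommGroup Y]
    [AddCommGroup Z] [Module R X] [Module R Y] [Module R Z] {f : X →ₗ[R] Y} {g : Y →ₗ[R] Z}
    (hf : Function.Injective f) (hfg : Function.Exact f g) (hg : Function.Surjective g)
    (hX : Module.Finite R X ∧ Module.Projective R X)
    (hZ : Module.Finite R Z ∧ Module.Projective R Z) :
    Module.Finite R Y ∧ Module.Projective R Y := by
  obtain ⟨_, _⟩ := hX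
  obtain ⟨_, _⟩ := hZ
  obtain ⟨l, hl⟩ := Module.projective_lifting_property g LinearMap.id hg
  have e := (hfg.splitSurjectiveEquiv hf ⟨l, hl⟩).1.symm
  exact ⟨Module.Finite.equiv e, Module.Projective.of_equiv e⟩

lemma finite_projective_of_equiv {X Y : Type} [AddCommGroup X] [AddCommGroup Y]
    [Module R X] [Module R Y] (e : X ≃ₗ[R] Y)
    (h : Module.Finite R X ∧ Module.Projective R X) :
    Module.Finite R Y ∧ Module.Projective R Y := by
  obtain ⟨_, _⟩ := h
  exact ⟨Module.Finite.equiv e, Module.Projective.of_equiv e⟩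

lemma finite_projective_pi {ι : Type} [Fintype ι] {X : ι → Type} [∀ i, AddCommGroup (X i)]
    [∀ i, Module R (X i)] (h : ∀ i, Module.Finite R (X i) ∧ Module.Projective R (X i)) :
    Module.Finite R (∀ i, X i) ∧ Module.Projective R (∀ i, X i) := by
  classical
  have := fun i => (h i).1
  have := fun i => (h i).2
  exact ⟨inferInstance, Module.Projective.of_equiv (DFinsupp.linearEquivFunOnFintype (R := R))⟩

variable {A : Type} [Ring A] [Algebra R A] {Λ : Type} [Fintype Λ]
  [PartialOrder Λ] {Δ : Λ → Type} [∀ l, AddCommGroup (Δ l)] [∀ l, Module R (Δ l)]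
  [∀ l, Module A (Δ l)] [∀ l, IsScalarTower R A (Δ l)]

/-- A module filtered by modules `Δ(λ) ⊗ U` is finitely generated projective over `R` if all the
`Δ(λ)` are. -/
theorem InFilt.finite_projective
    (hΔ : ∀ l, Module.Finite R (Δ l) ∧ Module.Projective R (Δ l)) {S : Set Λ} {M : Type}
    [AddCommGroup M] [Module R M] [Module A M] [IsScalarTower R A M]
    (hM : InFilt R A Λ Δ S M) : Module.Finite R M ∧ Module.Projective R M := by
  refine InFilt.induction (fun X _ _ => ∀ [Module R X] [IsScalarTower R A X],
    Module.Finite R X ∧ Module.Projective R X) ?_ ?_ ?_ ?_ hM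
  · intro X Y _ _ _ _ e hX _ _
    let : Module R X := Module.compHom X (algebraMap R A)
    have : IsScalarTower R A X := ⟨fun r a x => by
      rw [Algebra.smul_def, mul_smul]; rfl⟩
    exact finite_projective_of_equiv (e.restrictScalars R) hX
  · intro X _ _ _ _ _
    exact ⟨inferInstance, inferInstance⟩
  · intro X _ _ S hS hQ _ _
    refine finite_projective_of_exact (f := S.subtype.restrictScalars R)
      (g := S.mkQ.restrictScalars R) S.subtype_injective (LinearMap.exact_subtype_mkQ S)
      S.mkQ_surjective hS hQ
  · intro l U _ _ _ _ m₁ t₁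
    obtain ⟨_, _⟩ := hΔ l
    obtain rfl : m₁ = TensorProduct.leftModule := by
      refine Module.ext' _ _ fun r x => ?_
      exact (algebraMap_smul A r x).symm.trans
        (@algebraMap_smul R _ A _ _ _ _ _ TensorProduct.leftModule _ r x)
    exact ⟨inferInstance, inferInstance⟩

end FiniteProjective

section ExtVanishing

variable {A : Type} [Ring A]

lemma extVanish_iff_subsingleton_ext (M : Type) [AddCommGroup M] [Module A M] (N : Type)
    [AddCommGroup N] [Module A N] (n : ℕ) :
    extVanish A M N (n + 1) ↔
      Subsingleton (Abelian.Ext (ModuleCat.of A M) (ModuleCat.of A N) (n + 1)) := by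
  let P := projectiveResolution (ModuleCat.of A M)
  let Y := ModuleCat.of A N
  trans ∀ f : P.complex.X (n + 1) ⟶ Y, P.complex.d (n + 2) (n + 1) ≫ f = 0 →
    ∃ g : P.complex.X n ⟶ Y, P.complex.d (n + 1) n ≫ g = f
  · rw [extVanish, ← ModuleCat.isZero_iff_subsingleton, (P.isoExt (n + 1) Y).isZero_iff,
      ← HomologicalComplex.exactAt_iff_isZero_homology,
      HomologicalComplex.exactAt_iff' _ n (n + 1) (n + 2) (by simp) (by simp),
      ShortComplex.moduleCat_exact_iff]
    rfl
  · constructor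
    · intro h
      refine subsingleton_of_forall_eq 0 fun α => ?_
      obtain ⟨f, hf, rfl⟩ := P.extMk_surjective α (n + 2) rfl
      exact (P.extMk_eq_zero_iff f (n + 2) rfl hf n rfl).2 (h f hf)
    · intro h f hf
      exact (P.extMk_eq_zero_iff f (n + 2) rfl hf n rfl).1 (Subsingleton.elim _ _)

/-- All positive-degree `Ext` groups from `M` to `N` vanish. -/
def ExtAcyclic (A : Type) [Ring A] (M : Type) [AddCommGroup M] [Module A M] (N : Type)
    [AddCommGroup N] [Module A N] : Prop :=
  ∀ n : ℕ, ∀ x : Abelian.Ext (ModuleCat.of A M) (ModuleCat.of A N) (n + 1), x = 0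

lemma extAcyclic_iff {M : Type} [AddCommGroup M] [Module A M] {N : Type}
    [AddCommGroup N] [Module A N] :
    ExtAcyclic A M N ↔ ∀ i : ℕ, 0 < i → extVanish A M N i := by
  constructor
  · rintro h (_ | n) hi
    · exact absurd hi (lt_irrefl 0)
    · exact (extVanish_iff_subsingleton_ext M N n).2 (subsingleton_of_forall_eq 0 (h n))
  · intro h n x
    have := (extVanish_iff_subsingleton_ext M N n).1 (h (n + 1) n.succ_pos)
    exact Subsingleton.elim _ _

variable {X Y N : Type} [AddCommGroup X] [Module A X] [AddCommGroup Y] [Module A Y]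
  [AddCommGroup N] [Module A N]

lemma FactorsThrough.exists_sum_comp_eq_id (h : FactorsThrough A X Y) :
    ∃ (n : ℕ) (a : Fin n → (ModuleCat.of A X ⟶ ModuleCat.of A Y))
      (b : Fin n → (ModuleCat.of A Y ⟶ ModuleCat.of A X)),
      ∑ j, a j ≫ b j = 𝟙 (ModuleCat.of A X) := by
  obtain ⟨n, a, b, hab⟩ := h
  refine ⟨n, fun j => ModuleCat.ofHom (a j), fun j => ModuleCat.ofHom (b j), ?_⟩
  apply ModuleCat.hom_ext
  simpa [ModuleCat.hom_sum] using hab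

lemma ExtAcyclic.of_factorsThrough_left (h : FactorsThrough A X Y) (hY : ExtAcyclic A Y N) :
    ExtAcyclic A X N := by
  intro n x
  obtain ⟨k, a, b, hab⟩ := h.exists_sum_comp_eq_id
  rw [← Abelian.Ext.mk₀_id_comp x, ← hab, Abelian.Ext.mk₀_sum, Abelian.Ext.sum_comp]
  refine Finset.sum_eq_zero fun j _ => ?_
  rw [← Abelian.Ext.mk₀_comp_mk₀_assoc, hY n ((Abelian.Ext.mk₀ (b j)).comp x _),
    Abelian.Ext.comp_zero]

lemma ExtAcyclic.of_factorsThrough_right (h : FactorsThrough A X Y) (hY : ExtAcyclic A N Y) :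
    ExtAcyclic A N X := by
  intro n x
  obtain ⟨k, a, b, hab⟩ := h.exists_sum_comp_eq_id
  rw [← Abelian.Ext.comp_mk₀_id x, ← hab, Abelian.Ext.mk₀_sum, Abelian.Ext.comp_sum]
  refine Finset.sum_eq_zero fun j _ => ?_
  rw [← Abelian.Ext.mk₀_comp_mk₀, ← Abelian.Ext.comp_assoc_of_second_deg_zero,
    hY n (x.comp (Abelian.Ext.mk₀ (a j)) _), Abelian.Ext.zero_comp]

lemma factorsThrough_of_equiv (e : X ≃ₗ[A] Y) : FactorsThrough A Y X :=
  ⟨1, fun _ => e.symm, fun _ => e, by simp⟩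

/-- The short complex of `A`-modules `S → X → X ⧸ S`. -/
abbrev quotientShortComplex (S : Submodule A X) : ShortComplex (ModuleCat.{0} A) :=
  ShortComplex.mk (ModuleCat.ofHom S.subtype) (ModuleCat.ofHom S.mkQ) (by
    ext x; simp)

lemma quotientShortComplex_shortExact (S : Submodule A X) :
    (quotientShortComplex S).ShortExact where
  exact := (ShortComplex.ShortExact.moduleCat_exact_iff_function_exact _).2
    (LinearMap.exact_subtype_mkQ S)
  mono_f := (ModuleCat.mono_iff_injective _).2 S.subtype_injective
  epi_g := (ModuleCat.epi_iff_surjective _).2 S.mkQ_surjective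

lemma ExtAcyclic.of_extension_left (S : Submodule A X) (hS : ExtAcyclic A S N)
    (hQ : ExtAcyclic A (X ⧸ S) N) : ExtAcyclic A X N := by
  intro n x
  obtain ⟨y, rfl⟩ := Abelian.Ext.contravariant_sequence_exact₂
    (quotientShortComplex_shortExact S) _ x (hS n _)
  rw [hQ n y, Abelian.Ext.comp_zero]

lemma ExtAcyclic.of_extension_right (S : Submodule A X) (hS : ExtAcyclic A N S)
    (hQ : ExtAcyclic A N (X ⧸ S)) : ExtAcyclic A N X := by
  intro n x
  obtain ⟨y, rfl⟩ := Abelian.Ext.covariant_sequence_exact₂ _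
    (quotientShortComplex_shortExact S) x (hQ n _)
  rw [hS n y, Abelian.Ext.zero_comp]

lemma ExtAcyclic.exists_extend {S : Submodule A X} (hQ : ExtAcyclic A (X ⧸ S) N)
    (f : S →ₗ[A] N) : ∃ g : X →ₗ[A] N, g.comp S.subtype = f := by
  obtain ⟨y, hy⟩ := Abelian.Ext.contravariant_sequence_exact₁
    (quotientShortComplex_shortExact S) (ModuleCat.of A N)
    (Abelian.Ext.mk₀ (ModuleCat.ofHom f)) rfl (hQ 0 _)
  obtain ⟨g, rfl⟩ := (Abelian.Ext.mk₀_bijective _ _).2 y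
  rw [Abelian.Ext.mk₀_comp_mk₀] at hy
  exact ⟨g.hom, congrArg ModuleCat.Hom.hom ((Abelian.Ext.mk₀_bijective _ _).1 hy)⟩

end ExtVanishing

section Filtered

variable {R : Type} [CommRing R] {A : Type} [Ring A] [Algebra R A] {Λ : Type} [Fintype Λ]
  [PartialOrder Λ] {Δ : Λ → Type} [∀ l, AddCommGroup (Δ l)] [∀ l, Module R (Δ l)]
  [∀ l, Module A (Δ l)] [∀ l, IsScalarTower R A (Δ l)]

theorem InFilt.extAcyclic_left {S : Set Λ} {M N : Type} [AddCommGroup M] [Module A M]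
    [AddCommGroup N] [Module A N] (hN : ∀ l, ExtAcyclic A (Δ l) N)
    (hM : InFilt R A Λ Δ S M) : ExtAcyclic A M N := by
  refine InFilt.induction (fun X _ _ => ExtAcyclic A X N) ?_ ?_ ?_ ?_ hM
  · intro X Y _ _ _ _ e
    exact ExtAcyclic.of_factorsThrough_left (factorsThrough_of_equiv e)
  · intro X _ _ _ n x
    exact Abelian.Ext.eq_zero_of_projective x
  · intro X _ _ S
    exact ExtAcyclic.of_extension_left S
  · intro l U _ _ _ _
    exact (hN l).of_factorsThrough_left (factorsThrough_tensor R U)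

theorem InFilt.extAcyclic_right {S : Set Λ} {M N : Type} [AddCommGroup M] [Module A M]
    [AddCommGroup N] [Module A N] (hM : ∀ l, ExtAcyclic A M (Δ l))
    (hN : InFilt R A Λ Δ S N) : ExtAcyclic A M N := by
  refine InFilt.induction (fun X _ _ => ExtAcyclic A M X) ?_ ?_ ?_ ?_ hN
  · intro X Y _ _ _ _ e
    exact ExtAcyclic.of_factorsThrough_right (factorsThrough_of_equiv e)
  · intro X _ _ _ n x
    rw [← Abelian.Ext.comp_mk₀_id x,
      (ModuleCat.isZero_of_iff_subsingleton.2 ‹Subsingleton X›).eq_of_src (𝟙 _) 0,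
      Abelian.Ext.mk₀_zero, Abelian.Ext.comp_zero]
  · intro X _ _ S
    exact ExtAcyclic.of_extension_right S
  · intro l U _ _ _ _
    exact (hM l).of_factorsThrough_right (factorsThrough_tensor R U)

lemma FactorsThrough.finite_projective_hom {X Y N : Type} [AddCommGroup X] [Module A X]
    [AddCommGroup Y] [Module A Y] [AddCommGroup N] [Module R N] [Module A N]
    [IsScalarTower R A N] (h : FactorsThrough A X Y)
    (hY : Module.Finite R (Y →ₗ[A] N) ∧ Module.Projective R (Y →ₗ[A] N)) :
    Module.Finite R (X →ₗ[A] N) ∧ Module.Projective R (X →ₗ[A] N) := by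
  obtain ⟨n, a, b, hab⟩ := h
  obtain ⟨_, _⟩ := finite_projective_pi fun _ : Fin n => hY
  let i : (X →ₗ[A] N) →ₗ[R] (Fin n → (Y →ₗ[A] N)) :=
    LinearMap.pi fun j => LinearMap.lcomp R N (b j)
  let p : (Fin n → (Y →ₗ[A] N)) →ₗ[R] (X →ₗ[A] N) :=
    ∑ j, (LinearMap.lcomp R N (a j)).comp (LinearMap.proj j)
  have hpi : p.comp i = LinearMap.id := by
    ext f x
    have hx := LinearMap.congr_fun hab x
    simp only [LinearMap.sum_apply, LinearMap.comp_apply, LinearMap.id_apply] at hx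
    simp only [p, i, LinearMap.sum_apply, LinearMap.comp_apply, LinearMap.id_apply,
      LinearMap.proj_apply, LinearMap.pi_apply, LinearMap.lcomp_apply]
    rw [← map_sum, hx]
  exact ⟨Module.Finite.of_surjective p (LinearMap.surjective_of_comp_eq_id _ _ hpi),
    Module.Projective.of_split i p hpi⟩

lemma finite_projective_hom_of_extension {X N : Type} [AddCommGroup X] [Module A X]
    [AddCommGroup N] [Module R N] [Module A N] [IsScalarTower R A N] (S : Submodule A X)
    (hS : Module.Finite R (S →ₗ[A] N) ∧ Module.Projective R (S →ₗ[A] N))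
    (hQ : Module.Finite R (X ⧸ S →ₗ[A] N) ∧ Module.Projective R (X ⧸ S →ₗ[A] N))
    (hext : ExtAcyclic A (X ⧸ S) N) :
    Module.Finite R (X →ₗ[A] N) ∧ Module.Projective R (X →ₗ[A] N) := by
  refine finite_projective_of_exact (f := LinearMap.lcomp R N S.mkQ)
    (g := LinearMap.lcomp R N S.subtype) ?_ ?_ ?_ hQ hS
  · intro f g hfg
    exact LinearMap.cancel_right S.mkQ_surjective |>.1 hfg
  · intro f
    constructor
    · intro hf
      have hS : S ≤ LinearMap.ker f := fun x hx => LinearMap.congr_fun hf ⟨x, hx⟩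
      exact ⟨S.liftQ f hS, S.liftQ_mkQ f hS⟩
    · rintro ⟨g, rfl⟩
      ext x
      exact (congrArg g ((Submodule.Quotient.mk_eq_zero S).2 x.2)).trans g.map_zero
  · intro f
    exact hext.exists_extend f

/-- If `N` is `Ext`-orthogonal to the modules `Δ(λ)`, and the modules `Hom(Δ(λ), N)` are finitely
generated projective over `R`, then so is `Hom(M, N)` for every filtered module `M`. -/
theorem InFilt.finite_projective_hom {S : Set Λ} {M N : Type} [AddCommGroup M] [Module A M]
    [AddCommGroup N] [Module R N] [Module A N] [IsScalarTower R A N]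
    (hN : ∀ l, ExtAcyclic A (Δ l) N)
    (hhom : ∀ l, Module.Finite R (Δ l →ₗ[A] N) ∧ Module.Projective R (Δ l →ₗ[A] N))
    (hM : InFilt R A Λ Δ S M) :
    Module.Finite R (M →ₗ[A] N) ∧ Module.Projective R (M →ₗ[A] N) := by
  refine (InFilt.induction (fun X _ _ => ExtAcyclic A X N ∧
    Module.Finite R (X →ₗ[A] N) ∧ Module.Projective R (X →ₗ[A] N)) ?_ ?_ ?_ ?_ hM).2
  · rintro X Y _ _ _ _ e ⟨h₁, h₂⟩
    exact ⟨h₁.of_factorsThrough_left (factorsThrough_of_equiv e),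
      (factorsThrough_of_equiv e).finite_projective_hom h₂⟩
  · intro X _ _ _
    exact ⟨fun n x => Abelian.Ext.eq_zero_of_projective x, inferInstance, inferInstance⟩
  · rintro X _ _ S ⟨h₁, h₂⟩ ⟨h₃, h₄⟩
    exact ⟨h₁.of_extension_left S h₃, finite_projective_hom_of_extension S h₂ h₄ h₃⟩
  · intro l U _ _ _ _
    exact ⟨(hN l).of_factorsThrough_left (factorsThrough_tensor R U),
      (factorsThrough_tensor R U).finite_projective_hom (hhom l)⟩

/-- Over a split quasi-hereditary algebra, a module `N` which is `Ext`-orthogonal to the standard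
modules and for which all `Hom(Δ(λ), N)` are finitely generated projective over `R` is itself
finitely generated projective over `R`. -/
theorem SplitQH.finite_projective (h : SplitQH R A Λ Δ) {N : Type} [AddCommGroup N]
    [Module R N] [Module A N] [IsScalarTower R A N] (hN : ∀ l, ExtAcyclic A (Δ l) N)
    (hhom : ∀ l, Module.Finite R (Δ l →ₗ[A] N) ∧ Module.Projective R (Δ l →ₗ[A] N)) :
    Module.Finite R N ∧ Module.Projective R N := by
  classical
  have hP : ∀ l, Module.Finite R (h.P l →ₗ[A] N) ∧ Module.Projective R (h.P l →ₗ[A] N) := by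
    intro l
    have e := (h.epi l).quotKerEquivOfSurjective (h.epi_surj l)
    exact finite_projective_hom_of_extension (LinearMap.ker (h.epi l))
      ((h.ker_filt l).finite_projective_hom hN hhom)
      ((factorsThrough_of_equiv e.symm).finite_projective_hom (hhom l))
      ((hN l).of_factorsThrough_left (factorsThrough_of_equiv e.symm))
  have hprod := finite_projective_of_equiv
    (LinearMap.lsum A (fun l => (h.P l : Type)) R : (∀ l, h.P l →ₗ[A] N) ≃ₗ[R] _)
    (finite_projective_pi hP)
  have hA := (h.add_gen (ModuleCat.of A A) (Module.Finite.self A)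
    (inferInstanceAs (Module.Projective A A))).factorsThrough.finite_projective_hom hprod
  exact finite_projective_of_equiv (LinearMap.ringLmapEquivSelf A R N) hA

end Filtered

noncomputable section

/-- If `M ∈ F(Δ̃)` and `N ∈ F(∇̃)`, then `Ext^i_A(M, N) = 0` for all
`i > 0`, and both `M` and `N` are (finitely generated) projective `R`-modules. -/
theorem ext_vanishes_for_filtered_modules
    (R : Type) [CommRing R] [IsNoetherianRing R]
    (A : Type) [Ring A] [Algebra R A]
    (Λ : Type) [Fintype Λ] [PartialOrder Λ]
    (Δ : Λ → Type) [∀ l, AddCommGroup (Δ l)] [∀ l, Module R (Δ l)]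
    [∀ l, Module A (Δ l)] [∀ l, IsScalarTower R A (Δ l)]
    (Nb : Λ → Type) [∀ l, AddCommGroup (Nb l)] [∀ l, Module R (Nb l)]
    [∀ l, Module A (Nb l)] [∀ l, IsScalarTower R A (Nb l)]
    (h : SplitQH R A Λ Δ) (hc : IsCostandard R A Λ Δ Nb)
    (M : Type) [AddCommGroup M] [Module R M] [Module A M] [IsScalarTower R A M]
    (N : Type) [AddCommGroup N] [Module R N] [Module A N] [IsScalarTower R A N]
    (hM : InFilt R A Λ Δ Set.univ M) (hN : InFilt R A Λ Nb Set.univ N) :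
    (∀ i : ℕ, 0 < i → extVanish A M N i) ∧
    (Module.Finite R M ∧ Module.Projective R M) ∧
    (Module.Finite R N ∧ Module.Projective R N) := by
  obtain ⟨-, hself, hne, hext⟩ := hc
  have hext' : ∀ l m, ExtAcyclic A (Δ l) (Nb m) := fun l m => extAcyclic_iff.2 (hext l m)
  have hhom : ∀ l m, Module.Finite R (Δ l →ₗ[A] Nb m) ∧
      Module.Projective R (Δ l →ₗ[A] Nb m) := by
    intro l m
    by_cases hlm : l = m
    · subst hlm
      obtain ⟨e⟩ := hself l
      exact finite_projective_of_equiv e.symm ⟨inferInstance, inferInstance⟩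
    · have := subsingleton_of_forall_eq 0 (hne l m hlm)
      exact ⟨inferInstance, inferInstance⟩
  exact ⟨extAcyclic_iff.1 (hN.extAcyclic_right fun m => hM.extAcyclic_left fun l => hext' l m),
    hM.finite_projective fun l => ⟨h.deltaFinR l, h.deltaProjR l⟩,
    hN.finite_projective fun m => h.finite_projective (hext' · m) (hhom · m)⟩

end
end
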